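/- arXiv:math/0203065 — 2 statements merged into one kernel-verified Lean document; each statement's English description precedes it below -/
import Mathlib

section
/- (Aarts–van Emde Boas) The Čech–Stone remainder H* of the half line H = [0,∞) maps onto every metric continuum: for every nonempty compact connected metric space K there exists a continuous surjection from H* onto K. -/
open Set Topology Function

noncomputable section

/-- The half line `H = [0,∞)` as a topological space. -/
abbrev HalfLine : Type := ↥(Set.Ici (0 : ℝ))

/-- The Čech–Stone remainder `H* = βH ∖ H` of the half line. -/
def HalfLineStar : Set (StoneCech HalfLine) :=
  (Set.range (stoneCechUnit : HalfLine → StoneCech HalfLine))ᶜ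

/-!
The extension of a map `g : H → Y` into a compact Hausdorff space sends `H*` onto the set of cluster
points of `g` at infinity. Embed `K` in the Hilbert cube, which is locally path connected: since `K`
is connected, any two of its points are joined by a path inside any prescribed neighbourhood of `K`.
Join the terms of a sequence in `K` that accumulates at every point of `K` by paths in smaller and
smaller neighbourhoods; the resulting ray has precisely `K` as its set of cluster points.
-/

open Filter TopologicalSpace

section StoneCechRemainder

variable {X Y : Type*} [TopologicalSpace X] [TopologicalSpace Y]

theorem comap_stoneCechUnit_nhds_le_cocompact {p : StoneCech X}
    (hp : p ∉ range (stoneCechUnit : X → StoneCech X)) :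
    comap stoneCechUnit (𝓝 p) ≤ cocompact X := by
  refine (hasBasis_cocompact.ge_iff).2 fun s hs => ?_
  have hclosed : IsClosed (stoneCechUnit '' s) := (hs.image continuous_stoneCechUnit).isClosed
  have hmem : (stoneCechUnit '' s)ᶜ ∈ 𝓝 p :=
    hclosed.isOpen_compl.mem_nhds fun h => hp (image_subset_range _ _ h)
  exact mem_of_superset (preimage_mem_comap hmem) fun x hx hxs => hx (mem_image_of_mem _ hxs)

theorem notMem_range_stoneCechUnit_of_tendsto [CompletelyRegularSpace X]
    [WeaklyLocallyCompactSpace X] {F : Filter X} [F.NeBot] (hF : F ≤ cocompact X)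
    {p : StoneCech X} (hp : Tendsto stoneCechUnit F (𝓝 p)) :
    p ∉ range (stoneCechUnit : X → StoneCech X) := by
  rintro ⟨x, rfl⟩
  have hx : F ≤ 𝓝 x := (isInducing_stoneCechUnit.tendsto_nhds_iff (f := id)).2 hp
  exact NeBot.ne ‹_› (disjoint_self.1 ((disjoint_nhds_cocompact x).mono hx hF))

variable [CompactSpace Y] [T2Space Y] {g : X → Y}

theorem tendsto_nhds_stoneCechExtend (hg : Continuous g) {F : Filter X} {p : StoneCech X}
    (hp : Tendsto stoneCechUnit F (𝓝 p)) : Tendsto g F (𝓝 (stoneCechExtend hg p)) :=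
  (((continuous_stoneCechExtend hg).tendsto p).comp hp).congr (stoneCechExtend_stoneCechUnit hg)

theorem image_stoneCechExtend_compl_range [CompletelyRegularSpace X] [WeaklyLocallyCompactSpace X]
    (hg : Continuous g) :
    stoneCechExtend hg '' (range stoneCechUnit)ᶜ = {y | MapClusterPt y (cocompact X) g} := by
  refine Subset.antisymm ?_ fun y hy => ?_
  · rintro _ ⟨p, hp, rfl⟩
    have : (comap (stoneCechUnit : X → StoneCech X) (𝓝 p)).NeBot :=
      isDenseInducing_stoneCechUnit.comap_nhds_neBot p
    exact (tendsto_nhds_stoneCechExtend hg tendsto_comap).mapClusterPt.mono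
      (comap_stoneCechUnit_nhds_le_cocompact hp)
  · obtain ⟨U, hU, hUy⟩ := mapClusterPt_iff_ultrafilter.1 hy
    have hUp : Tendsto stoneCechUnit U (𝓝 (U.map stoneCechUnit).lim) :=
      (U.map stoneCechUnit).le_nhds_lim
    exact ⟨_, notMem_range_stoneCechUnit_of_tendsto hU hUp,
      tendsto_nhds_unique (tendsto_nhds_stoneCechExtend hg hUp) hUy⟩

theorem exists_continuous_surjective_compl_range_stoneCechUnit [CompletelyRegularSpace X]
    [WeaklyLocallyCompactSpace X] {K : Type*} [TopologicalSpace K] {e : K → Y} (he : IsEmbedding e)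
    (hg : Continuous g) (hge : {y | MapClusterPt y (cocompact X) g} = range e) :
    ∃ f : ((range stoneCechUnit)ᶜ : Set (StoneCech X)) → K, Continuous f ∧ Surjective f := by
  have himage := (image_stoneCechExtend_compl_range hg).trans hge
  choose f hf using fun p : ((range stoneCechUnit)ᶜ : Set (StoneCech X)) =>
    himage.subset (mem_image_of_mem _ p.2)
  refine ⟨f, he.continuous_iff.2 ?_, fun k => ?_⟩
  · rw [show e ∘ f = _ from funext hf]
    exact (continuous_stoneCechExtend hg).comp continuous_subtype_val
  · obtain ⟨p, hp, hpk⟩ := himage.superset (mem_range_self k)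
    exact ⟨⟨p, hp⟩, he.injective ((hf _).trans hpk)⟩

end StoneCechRemainder

section ConcatPaths

variable {Y : Type*} [TopologicalSpace Y] {a : ℕ → Y}

/-- The infinite concatenation of paths `p n` from `a n` to `a (n + 1)`, traversing `p n` on
`[n, n + 1]`. It is constant on `(-∞, 0]`. -/
def concatPaths (p : ∀ n, Path (a n) (a (n + 1))) (t : ℝ) : Y :=
  (p ⌊t⌋₊).extend (t - ⌊t⌋₊)

variable (p : ∀ n, Path (a n) (a (n + 1)))

theorem concatPaths_natCast (n : ℕ) : concatPaths p n = a n := by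
  simp [concatPaths]

theorem concatPaths_mem_range (t : ℝ) : concatPaths p t ∈ range (p ⌊t⌋₊) :=
  (p ⌊t⌋₊).extend_range ▸ mem_range_self _

theorem concatPaths_eqOn_Icc (n : ℕ) :
    EqOn (concatPaths p) (fun t => (p n).extend (t - n)) (Icc n (n + 1)) := by
  rintro t ⟨hnt, htn⟩
  rcases htn.lt_or_eq with hlt | rfl
  · have hfloor : ⌊t⌋₊ = n := (Nat.floor_eq_iff (n.cast_nonneg.trans hnt)).2 ⟨hnt, hlt⟩
    change (p ⌊t⌋₊).extend (t - ⌊t⌋₊) = (p n).extend (t - n)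
    rw [hfloor]
  · have hend := concatPaths_natCast p (n + 1)
    push_cast at hend
    simp [hend]

theorem locallyFinite_Icc_natCast : LocallyFinite fun n : ℕ => Icc (n : ℝ) (n + 1) := by
  have hint : LocallyFinite fun n : ℤ => Icc (n : ℝ) (n + 1) :=
    locallyFinite_Icc_of_tendsto tendsto_intCast_atTop_atTop
      (tendsto_atBot_add_const_right _ _ (tendsto_intCast_atBot_iff.2 tendsto_id))
  simpa [comp_def] using hint.comp_injective Nat.cast_injective

theorem continuousOn_concatPaths : ContinuousOn (concatPaths p) (Ici 0) := by
  have hunion : ContinuousOn (concatPaths p) (⋃ n : ℕ, Icc (n : ℝ) (n + 1)) := by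
    refine locallyFinite_Icc_natCast.continuousOn_iUnion (fun n => isClosed_Icc) fun n => ?_
    refine ContinuousOn.congr ?_ (concatPaths_eqOn_Icc p n)
    exact ((p n).continuous_extend.comp (continuous_id.sub continuous_const)).continuousOn
  exact hunion.mono fun t ht =>
    mem_iUnion.2 ⟨⌊t⌋₊, Nat.floor_le ht, (Nat.lt_floor_add_one t).le⟩

variable {p}

theorem tendsto_concatPaths_atTop {F : Filter Y}
    (hp : Tendsto (fun n => range (p n)) atTop F.smallSets) :
    Tendsto (concatPaths p) atTop F :=
  (hp.comp tendsto_nat_floor_atTop).of_smallSets (.of_forall (concatPaths_mem_range p))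

end ConcatPaths

section ClusterSet

theorem exists_seq_forall_mapClusterPt (K : Type*) [TopologicalSpace K] [SeparableSpace K]
    [Nonempty K] : ∃ d : ℕ → K, ∀ k, MapClusterPt k atTop d := by
  refine ⟨fun n => denseSeq K n.unpair.1, fun k => mapClusterPt_iff_frequently.2 fun s hs => ?_⟩
  obtain ⟨i, hi⟩ := (denseRange_denseSeq K).exists_mem_open isOpen_interior
    ⟨k, mem_interior_iff_mem_nhds.2 hs⟩
  refine frequently_atTop.2 fun n => ⟨Nat.pair i n, Nat.right_le_pair i n, ?_⟩
  simpa only [Nat.unpair_pair] using interior_subset hi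

variable {Y : Type*}

theorem joinedIn_of_isPreconnected_subset [TopologicalSpace Y] [LocallyPathConnectedSpace Y]
    {S U : Set Y} (hS : IsPreconnected S) (hU : IsOpen U) (hSU : S ⊆ U) {x y : Y} (hx : x ∈ S)
    (hy : y ∈ S) : JoinedIn U x y := by
  have hpath : IsPathConnected (connectedComponentIn U x) :=
    hU.connectedComponentIn.isConnected_iff_isPathConnected.1
      (isConnected_connectedComponentIn_iff.2 (hSU hx))
  exact (hpath.joinedIn x (mem_connectedComponentIn (hSU hx)) y
    (hS.subset_connectedComponentIn hx hSU hy)).mono (connectedComponentIn_subset U x)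

theorem isCountablyGenerated_nhdsSet [UniformSpace Y] [(uniformity Y).IsCountablyGenerated]
    {S : Set Y} (hS : IsCompact S) : (𝓝ˢ S).IsCountablyGenerated := by
  obtain ⟨V, hV⟩ := (uniformity Y).exists_antitone_basis
  exact (hS.nhdsSet_basis_uniformity hV.1).isCountablyGenerated

theorem exists_paths_tendsto_smallSets_nhdsSet [TopologicalSpace Y] [LocallyPathConnectedSpace Y]
    {S : Set Y} [(𝓝ˢ S).IsCountablyGenerated] (hS : IsPreconnected S) {a : ℕ → Y}
    (ha : ∀ n, a n ∈ S) :
    ∃ p : ∀ n, Path (a n) (a (n + 1)), Tendsto (fun n => range (p n)) atTop (𝓝ˢ S).smallSets := by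
  obtain ⟨U, hU⟩ := (𝓝ˢ S).exists_antitone_basis
  have hjoined : ∀ n, JoinedIn (interior (U n)) (a n) (a (n + 1)) := fun n =>
    joinedIn_of_isPreconnected_subset hS isOpen_interior
      (subset_interior_iff_mem_nhdsSet.2 (hU.mem n)) (ha n) (ha (n + 1))
  refine ⟨fun n => (hjoined n).somePath, hU.tendsto_smallSets.smallSets_mono (.of_forall ?_)⟩
  rintro n _ ⟨s, rfl⟩
  exact interior_subset ((hjoined n).somePath_mem s)

theorem exists_continuousOn_Ici_setOf_mapClusterPt_eq [TopologicalSpace Y] [RegularSpace Y]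
    [LocallyPathConnectedSpace Y] {S : Set Y} [SeparableSpace S] [(𝓝ˢ S).IsCountablyGenerated]
    (hS : IsConnected S) (hclosed : IsClosed S) :
    ∃ g : ℝ → Y, ContinuousOn g (Ici 0) ∧ {y | MapClusterPt y atTop g} = S := by
  have : Nonempty S := hS.nonempty.to_subtype
  obtain ⟨d, hd⟩ := exists_seq_forall_mapClusterPt S
  obtain ⟨p, hp⟩ := exists_paths_tendsto_smallSets_nhdsSet hS.isPreconnected fun n => (d n).2
  refine ⟨concatPaths p, continuousOn_concatPaths p,
    Subset.antisymm (fun y hy => ?_) fun y hy => ?_⟩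
  · by_contra hyS
    have hdisj : Disjoint (𝓝 y) (𝓝ˢ S) := disjoint_nhds_nhdsSet.2 (hclosed.closure_eq.symm ▸ hyS)
    exact hy.ne (disjoint_iff.1 (hdisj.mono_right (tendsto_concatPaths_atTop hp)))
  · refine MapClusterPt.of_comp tendsto_natCast_atTop_atTop ?_
    rw [show concatPaths p ∘ Nat.cast = Subtype.val ∘ d from funext (concatPaths_natCast p)]
    exact (hd ⟨y, hy⟩).continuousAt_comp continuous_subtype_val.continuousAt

end ClusterSet

theorem map_val_Ici_cocompact {α : Type*} [LinearOrder α] [NoMaxOrder α] [TopologicalSpace α]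
    [OrderClosedTopology α] [CompactIccSpace α] (a : α) :
    map (Subtype.val : Ici a → α) (cocompact (Ici a)) = atTop := by
  have : CompactIccSpace (Ici a) :=
    ⟨fun {_ _} => isClosed_Ici.isClosedEmbedding_subtypeVal.isCompact_preimage isCompact_Icc⟩
  rw [cocompact_eq_atTop, map_val_Ici_atTop]

theorem locallyPathConnectedSpace_pi_unitInterval (ι : Type*) :
    LocallyPathConnectedSpace (ι → unitInterval) := by
  have : PathConnectedSpace unitInterval :=
    isPathConnected_iff_pathConnectedSpace.1 ((convex_Icc (0 : ℝ) 1).isPathConnected ⟨0, by simp⟩)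
  have : LocallyPathConnectedSpace unitInterval := (convex_Icc (0 : ℝ) 1).locallyPathConnectedSpace
  infer_instance

/-- (Aarts–van Emde Boas) `H*` maps onto every metric continuum. -/
theorem halfLineStar_maps_onto_metric_continua
    (K : Type*) [MetricSpace K] [CompactSpace K] [ConnectedSpace K] [Nonempty K] :
    ∃ f : HalfLineStar → K, Continuous f ∧ Surjective f := by
  obtain ⟨e, he⟩ := Metric.PiNatEmbed.exists_embedding_to_hilbert_cube (X := K)
  have hcompact : IsCompact (range e) := isCompact_range he.continuous
  have : LocallyCompactSpace HalfLine :=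
    isClosed_Ici.isClosedEmbedding_subtypeVal.locallyCompactSpace
  have := locallyPathConnectedSpace_pi_unitInterval ℕ
  have := isCountablyGenerated_nhdsSet hcompact
  obtain ⟨g, hg, hcluster⟩ := exists_continuousOn_Ici_setOf_mapClusterPt_eq
    (isConnected_range he.continuous) hcompact.isClosed
  refine exists_continuous_surjective_compl_range_stoneCechUnit he hg.domRestrict ?_
  rw [← hcluster, ← map_val_Ici_cocompact]
  exact Set.ext fun _ => mapClusterPt_comp
end
end

section
/- Every continuum is the weakly confluent image of a hereditarily indecomposable continuum of the same weight: for every infinite cardinal κ and every nonempty compact connected Hausdorff space X admitting a base for its topology of cardinality at most κ, there exist a nonempty compact connected Hausdorff hereditarily indecomposable space Y admitting a base of cardinality at most κ and a weakly confluent continuous surjection from Y onto X. -/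
open Set Topology Function

universe u

/-- A space is hereditarily indecomposable if whenever two subcontinua
(nonempty closed connected subsets) meet, one contains the other. -/
def HereditarilyIndecomposable (X : Type*) [TopologicalSpace X] : Prop :=
  ∀ A B : Set X, IsClosed A → IsConnected A → IsClosed B → IsConnected B →
    (A ∩ B).Nonempty → A ⊆ B ∨ B ⊆ A

/-- A continuous surjection `f : Y → X` is weakly confluent if every subcontinuum
(nonempty closed connected subset) of `X` is the image of a subcontinuum of `Y`. -/
def WeaklyConfluent {Y X : Type*} [TopologicalSpace Y] [TopologicalSpace X]
    (f : Y → X) : Prop :=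
  ∀ K : Set X, IsClosed K → IsConnected K →
    ∃ L : Set Y, IsClosed L ∧ IsConnected L ∧ f '' L = K

/-!
If a continuous function `f` is `≤ 0` on a continuum `A` and `≥ 0` on a continuum `B`, but `< -1`
somewhere on `A` and `> 1` somewhere on `B`, and if `f = fold ∘ t` for the zigzag `fold` and some
continuous `t`, then the intermediate value theorem forces `t < 0` on `A` and `t > 0` on `B`, so `A`
and `B` are disjoint. A compact space is therefore hereditarily indecomposable as soon as
sufficiently many of its functions lift along `fold`.

Adjoining such a lift of `f : C → ℝ` to a continuum `C` means passing to the pullback of `f` and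
`fold`. As `fold` has degree one, the component of the pullback over a maximum of `|f|` maps onto
`C`, and the same argument over the subcontinua of `C` shows that it does so weakly confluently.

Iterating this over at most `κ` functions, indexed by terms that may mention the lifts adjoined
earlier, gives the required space. All finite stages are realised as subcontinua of one compact
space; the limit is taken in its hyperspace, where weak confluence is a closed condition.
-/

open TopologicalSpace

section WeaklyConfluent

theorem WeaklyConfluent.comp {Z Y X : Type*} [TopologicalSpace Z] [TopologicalSpace Y]
    [TopologicalSpace X] {f : Y → X} {g : Z → Y} (hf : WeaklyConfluent f)
    (hg : WeaklyConfluent g) : WeaklyConfluent (f ∘ g) := by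
  intro K hK hKc
  obtain ⟨L, hL, hLc, rfl⟩ := hf K hK hKc
  obtain ⟨M, hM, hMc, rfl⟩ := hg L hL hLc
  exact ⟨M, hM, hMc, image_comp f g M⟩

theorem WeaklyConfluent.surjective {Y X : Type*} [TopologicalSpace Y] [TopologicalSpace X]
    [ConnectedSpace X] {f : Y → X} (hf : WeaklyConfluent f) : Surjective f := by
  obtain ⟨L, -, -, hL⟩ := hf univ isClosed_univ isConnected_univ
  exact range_eq_univ.1 (univ_subset_iff.1 (hL ▸ image_subset_range f L))

/-- Weak confluence of the restriction of `p` to the subset `C`, expressed with subcontinua of the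
ambient space so that it can be tested in the hyperspace of that space. -/
def WeaklyConfluentOn {E X : Type*} [TopologicalSpace E] [TopologicalSpace X]
    (p : E → X) (C : Set E) : Prop :=
  ∀ K : Set X, IsClosed K → IsConnected K →
    ∃ L ⊆ C, IsClosed L ∧ IsConnected L ∧ p '' L = K

theorem WeaklyConfluentOn.domRestrict {E X : Type*} [TopologicalSpace E] [TopologicalSpace X]
    {p : E → X} {C : Set E} (h : WeaklyConfluentOn p C) : WeaklyConfluent (C.domRestrict p) := by
  intro K hK hKc
  obtain ⟨L, hLC, hL, hLc, rfl⟩ := h K hK hKc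
  have himage : Subtype.val '' (Subtype.val ⁻¹' L : Set C) = L := by
    rw [Subtype.image_preimage_coe, inter_eq_right.2 hLC]
  refine ⟨Subtype.val ⁻¹' L, hL.preimage continuous_subtype_val, ⟨?_, ?_⟩, ?_⟩
  · obtain ⟨x, hx⟩ := hLc.nonempty
    exact ⟨⟨x, hLC hx⟩, hx⟩
  · rw [← IsInducing.subtypeVal.isPreconnected_image, himage]
    exact hLc.isPreconnected
  · rw [domRestrict_eq, image_comp, himage]

theorem WeaklyConfluent.weaklyConfluentOn_range {Y E X : Type*} [TopologicalSpace Y]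
    [CompactSpace Y] [TopologicalSpace E] [T2Space E] [TopologicalSpace X] {p : E → X} {g : Y → E}
    (h : WeaklyConfluent (p ∘ g)) (hg : Continuous g) : WeaklyConfluentOn p (range g) := by
  intro K hK hKc
  obtain ⟨L, hL, hLc, rfl⟩ := h K hK hKc
  exact ⟨g '' L, image_subset_range g L, hg.isClosedMap L hL, hLc.image g hg.continuousOn,
    (image_comp p g L).symm⟩

end WeaklyConfluent

section Hyperspace

variable {E X : Type*} [TopologicalSpace E] [T2Space E] [TopologicalSpace X]

theorem isClosed_setOf_isConnected_nonemptyCompacts :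
    IsClosed {K : NonemptyCompacts E | IsConnected (K : Set E)} := by
  rw [← isOpen_compl_iff, isOpen_iff_mem_nhds]
  intro K hK
  have hKp : ¬ IsPreconnected (K : Set E) := fun h => hK ⟨K.nonempty, h⟩
  rw [isPreconnected_iff_subset_of_fully_disjoint_closed K.isCompact.isClosed] at hKp
  push Not at hKp
  obtain ⟨A, B, hA, hB, hKAB, hAB, hKA, hKB⟩ := hKp
  obtain ⟨U, V, hU, hV, hAU, hBV, hUV⟩ := SeparatedNhds.of_isCompact_isCompact
    (K.isCompact.inter_right hA) (K.isCompact.inter_right hB)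
    (hAB.mono inter_subset_right inter_subset_right)
  have hKUV : (K : Set E) ⊆ U ∪ V := fun x hx =>
    (hKAB hx).imp (fun h => hAU ⟨hx, h⟩) (fun h => hBV ⟨hx, h⟩)
  obtain ⟨a, haK, haA⟩ := not_subset.1 hKA
  obtain ⟨b, hbK, hbB⟩ := not_subset.1 hKB
  have hKU : ((K : Set E) ∩ U).Nonempty := ⟨b, hbK, hAU ⟨hbK, (hKAB hbK).resolve_right hbB⟩⟩
  have hKV : ((K : Set E) ∩ V).Nonempty := ⟨a, haK, hBV ⟨haK, (hKAB haK).resolve_left haA⟩⟩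
  filter_upwards [(NonemptyCompacts.isOpen_subsets_of_isOpen (hU.union hV)).mem_nhds hKUV,
    (NonemptyCompacts.isOpen_inter_nonempty_of_isOpen hU).mem_nhds hKU,
    (NonemptyCompacts.isOpen_inter_nonempty_of_isOpen hV).mem_nhds hKV] with L hL hLU hLV hLc
  obtain ⟨x, -, hxU, hxV⟩ := hLc.isPreconnected U V hU hV hL hLU hLV
  exact disjoint_left.1 hUV hxU hxV

theorem isClosed_setOf_le_nonemptyCompacts :
    IsClosed {P : NonemptyCompacts E × NonemptyCompacts E | P.1 ≤ P.2} := by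
  simp only [← sup_eq_right]
  exact isClosed_eq (by fun_prop) continuous_snd

theorem weaklyConfluentOn_iff_nonemptyCompacts [CompactSpace E] [CompactSpace X] [T2Space X]
    {p : E → X} (hp : Continuous p) {C : Set E} :
    WeaklyConfluentOn p C ↔ ∀ K : NonemptyCompacts X, IsConnected (K : Set X) →
      ∃ L : NonemptyCompacts E, (L : Set E) ⊆ C ∧ IsConnected (L : Set E) ∧ L.map p hp = K := by
  constructor
  · intro h K hK
    obtain ⟨L, hLC, hL, hLc, hLK⟩ := h K K.isCompact.isClosed hK
    exact ⟨⟨⟨L, hL.isCompact⟩, hLc.nonempty⟩, hLC, hLc, NonemptyCompacts.ext hLK⟩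
  · intro h K hK hKc
    obtain ⟨L, hLC, hLc, hLK⟩ := h ⟨⟨K, hK.isCompact⟩, hKc.nonempty⟩ hKc
    exact ⟨L, hLC, L.isCompact.isClosed, hLc, congrArg SetLike.coe hLK⟩

/- For each `K` the admissible `C` form the projection of a closed set of pairs `(C, L)` along the
compact factor of the `L`'s. -/
theorem isClosed_setOf_weaklyConfluentOn [CompactSpace E] [CompactSpace X] [T2Space X]
    {p : E → X} (hp : Continuous p) :
    IsClosed {C : NonemptyCompacts E | WeaklyConfluentOn p (C : Set E)} := by
  simp only [weaklyConfluentOn_iff_nonemptyCompacts hp, ofPred_forall]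
  refine isClosed_iInter fun K => isClosed_iInter fun _ => ?_
  let lifts : Set (NonemptyCompacts E × NonemptyCompacts E) :=
    {P | P.2 ≤ P.1 ∧ IsConnected (P.2 : Set E) ∧ P.2.map p hp = K}
  have hlifts : IsClosed lifts :=
    (isClosed_setOf_le_nonemptyCompacts.preimage continuous_swap).inter <|
      (isClosed_setOf_isConnected_nonemptyCompacts.preimage continuous_snd).inter <|
        isClosed_eq (hp.nonemptyCompacts_map.comp continuous_snd) continuous_const
  convert isClosedMap_fst_of_compactSpace lifts hlifts using 1
  ext C
  simp [lifts]

end Hyperspace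

section Fold

/-- The piecewise linear zigzag with slopes `1`, `-1`, `1` and turning points `-1 ↦ 1`, `1 ↦ -1`;
pulling a function back along it introduces the crookedness of the construction. -/
noncomputable def fold (t : ℝ) : ℝ := max (t - 2) (min (t + 2) (-t))

@[fun_prop]
theorem continuous_fold : Continuous fold := by unfold fold; fun_prop

theorem fold_neg (t : ℝ) : fold (-t) = -fold t := by
  unfold fold
  grind

theorem abs_le_abs_fold_add_two (t : ℝ) : |t| ≤ |fold t| + 2 := by
  unfold fold
  grind

theorem fold_eq_iff {t v : ℝ} :
    fold t = v ↔ v ≤ 1 ∧ t = v - 2 ∨ |v| ≤ 1 ∧ t = -v ∨ -1 ≤ v ∧ t = v + 2 := by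
  unfold fold
  grind

theorem exists_continuous_section_fold (t : ℝ) :
    ∃ σ : ℝ → ℝ, Continuous σ ∧ σ (fold t) = t ∧ ∀ v, |v| ≤ 1 → fold (σ v) = v := by
  rcases fold_eq_iff.1 (rfl : fold t = fold t) with ⟨-, h⟩ | ⟨-, h⟩ | ⟨-, h⟩
  · exact ⟨fun v => v - 2, by fun_prop, h.symm,
      fun v hv => fold_eq_iff.2 (.inl ⟨(abs_le.1 hv).2, rfl⟩)⟩
  · exact ⟨fun v => -v, by fun_prop, h.symm, fun v hv => fold_eq_iff.2 (.inr (.inl ⟨hv, rfl⟩))⟩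
  · exact ⟨fun v => v + 2, by fun_prop, h.symm,
      fun v hv => fold_eq_iff.2 (.inr (.inr ⟨(abs_le.1 hv).1, rfl⟩))⟩

theorem surjective_fold : Surjective fold := fun v => by
  rcases le_total v 0 with hv | hv
  · exact ⟨v - 2, fold_eq_iff.2 (.inl ⟨by linarith, rfl⟩)⟩
  · exact ⟨v + 2, fold_eq_iff.2 (.inr (.inr ⟨by linarith, rfl⟩))⟩

theorem neg_of_fold_nonpos_of_isPreconnected {Y : Type*} [TopologicalSpace Y] {P : Set Y}
    (hP : IsPreconnected P) {t : Y → ℝ} (ht : ContinuousOn t P) (hfold : ∀ y ∈ P, fold (t y) ≤ 0)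
    {a c : Y} (ha : a ∈ P) (hta : fold (t a) < -1) (hc : c ∈ P) : t c < 0 := by
  by_contra! htc
  have hta' : t a < -1 := by unfold fold at hta; grind
  obtain ⟨y, hy, hty⟩ := hP.intermediate_value ha hc ht ⟨hta'.le, by linarith⟩
  have : fold (-1) = 1 := by norm_num [fold]
  linarith [hty ▸ hfold y hy]

theorem pos_of_fold_nonneg_of_isPreconnected {Y : Type*} [TopologicalSpace Y] {P : Set Y}
    (hP : IsPreconnected P) {t : Y → ℝ} (ht : ContinuousOn t P) (hfold : ∀ y ∈ P, 0 ≤ fold (t y))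
    {b c : Y} (hb : b ∈ P) (htb : 1 < fold (t b)) (hc : c ∈ P) : 0 < t c := by
  refine neg_neg_iff_pos.1 (neg_of_fold_nonpos_of_isPreconnected (t := fun y => -t y) hP ht.neg
    (fun y hy => ?_) hb ?_ hc)
  · simpa only [fold_neg, neg_nonpos] using hfold y hy
  · simpa only [fold_neg, neg_lt_neg_iff] using htb

/-- The sum of `g` over the fibre of `fold` above `v`, with signs the slopes of the branches. The
branches are extended beyond their ranges by constants; where only one of them lies over `v`, the
other two contribute terms that cancel, so that the sum is continuous in `v`. -/
noncomputable def signedFibreSum (g : ℝ → ℝ) (v : ℝ) : ℝ :=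
  g (min v 1 - 2) - g (-max (-1) (min v 1)) + g (max v (-1) + 2)

theorem signedFibreSum_of_lt_neg_one (g : ℝ → ℝ) {v : ℝ} (hv : v < -1) :
    signedFibreSum g v = g (v - 2) := by
  have h₁ : min v 1 = v := by grind
  have h₂ : -max (-1) (min v 1) = max v (-1) + 2 := by grind
  rw [signedFibreSum, h₂, h₁, sub_add_cancel]

theorem signedFibreSum_of_one_lt (g : ℝ → ℝ) {v : ℝ} (hv : 1 < v) :
    signedFibreSum g v = g (v + 2) := by
  have h₁ : max v (-1) = v := by grind
  have h₂ : -max (-1) (min v 1) = min v 1 - 2 := by grind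
  rw [signedFibreSum, h₂, h₁, sub_self, zero_add]

theorem signedFibreSum_of_abs_le_one (g : ℝ → ℝ) {v : ℝ} (hv : |v| ≤ 1) :
    signedFibreSum g v = g (v - 2) - g (-v) + g (v + 2) := by
  have h₁ : min v 1 = v := by grind
  have h₂ : max (-1) v = v := by grind
  rw [signedFibreSum, h₁, h₂, max_comm, h₂]

theorem signedFibreSum_mem {H : AddSubgroup ℝ} {g : ℝ → ℝ} {v : ℝ}
    (h : ∀ t, fold t = v → g t ∈ H) : signedFibreSum g v ∈ H := by
  simp only [fold_eq_iff] at h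
  rcases lt_or_ge v (-1) with hv | hv
  · rw [signedFibreSum_of_lt_neg_one g hv]
    exact h _ (.inl ⟨by linarith, rfl⟩)
  rcases lt_or_ge 1 v with hv' | hv'
  · rw [signedFibreSum_of_one_lt g hv']
    exact h _ (.inr (.inr ⟨hv, rfl⟩))
  have habs : |v| ≤ 1 := abs_le.2 ⟨hv, hv'⟩
  rw [signedFibreSum_of_abs_le_one g habs]
  exact H.add_mem (H.sub_mem (h _ (.inl ⟨hv', rfl⟩)) (h _ (.inr (.inl ⟨habs, rfl⟩))))
    (h _ (.inr (.inr ⟨hv, rfl⟩)))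

theorem signedFibreSum_eq_of_one_lt_abs {g : ℝ → ℝ} {t : ℝ} (ht : 1 < |fold t|) :
    signedFibreSum g (fold t) = g t := by
  rcases lt_abs.1 ht with h | h
  · rw [signedFibreSum_of_one_lt g h]
    congr 1
    grind [fold_eq_iff (t := t) (v := fold t)]
  · rw [signedFibreSum_of_lt_neg_one g (by linarith)]
    congr 1
    grind [fold_eq_iff (t := t) (v := fold t)]

end Fold

section FoldPullback

theorem surjOn_connectedComponent_of_isClopen {Y C : Type*} [TopologicalSpace Y] [CompactSpace Y]
    [T2Space Y] [TopologicalSpace C] [T1Space C] {p : Y → C} (hp : Continuous p) {y : Y}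
    (h : ∀ W, IsClopen W → y ∈ W → SurjOn p W univ) : SurjOn p (connectedComponent y) univ := by
  intro z hz
  let ι := {W : Set Y // IsClopen W ∧ y ∈ W}
  have : Nonempty ι := ⟨⟨univ, isClopen_univ, mem_univ y⟩⟩
  have hclosed (W : ι) : IsClosed (W.1 ∩ p ⁻¹' {z}) :=
    W.2.1.isClosed.inter (isClosed_singleton.preimage hp)
  obtain ⟨x, hx⟩ : (⋂ W : ι, W.1 ∩ p ⁻¹' {z}).Nonempty :=
    IsCompact.nonempty_iInter_of_directed_nonempty_isCompact_isClosed _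
      (fun V W => ⟨⟨V.1 ∩ W.1, V.2.1.inter W.2.1, V.2.2, W.2.2⟩,
        inter_subset_inter_left _ inter_subset_left, inter_subset_inter_left _ inter_subset_right⟩)
      (fun W => h W.1 W.2.1 W.2.2 hz) (fun W => (hclosed W).isCompact) hclosed
  rw [mem_iInter] at hx
  refine ⟨x, ?_, (hx (Classical.arbitrary ι)).2⟩
  rw [connectedComponent_eq_iInter_isClopen]
  exact mem_iInter.2 fun W => (hx W).1

theorem continuous_pullback_fst {X Y Z : Type*} [TopologicalSpace X] [TopologicalSpace Z]
    {f : X → Y} {g : Z → Y} : Continuous (Pullback.fst : f.Pullback g → X) :=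
  continuous_fst.comp continuous_subtype_val

variable {C : Type*} [TopologicalSpace C] {f : C → ℝ}

theorem isClosedEmbedding_val_pullback_fold (hf : Continuous f) :
    IsClosedEmbedding (Subtype.val : f.Pullback fold → C × ℝ) :=
  (isClosed_eq (by fun_prop) (by fun_prop)).isClosedEmbedding_subtypeVal

theorem compactSpace_pullback_fold [CompactSpace C] (hf : Continuous f) :
    CompactSpace (f.Pullback fold) := by
  obtain ⟨M, hM⟩ := isCompact_univ.exists_bound_of_continuousOn hf.continuousOn
  have hrange : range (Subtype.val : f.Pullback fold → C × ℝ) ⊆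
      univ ×ˢ Icc (-(M + 2)) (M + 2) := by
    rintro _ ⟨⟨⟨z, t⟩, hzt : f z = fold t⟩, rfl⟩
    refine ⟨mem_univ z, abs_le.1 ((abs_le_abs_fold_add_two t).trans ?_)⟩
    rw [← hzt]
    exact add_le_add_left (hM z (mem_univ z)) 2
  have hemb := isClosedEmbedding_val_pullback_fold hf
  rw [← isCompact_univ_iff, hemb.isCompact_iff, image_univ]
  exact (isCompact_univ.prod isCompact_Icc).of_isClosed_subset hemb.isClosed_range hrange

/- For a clopen set `W` of the pullback, the signed number of points of `W` over `z ∈ C` is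
independent of `z`: it is a continuous integer-valued function. -/
theorem surjOn_pullback_fst_of_isClopen [CompactSpace C] [T2Space C] [PreconnectedSpace C]
    (hf : Continuous f) {W : Set (f.Pullback fold)} (hW : IsClopen W) {y : f.Pullback fold}
    (hy : y ∈ W) (hfy : 1 < |f y.fst|) : SurjOn Pullback.fst W univ := by
  intro z _
  by_contra hz
  obtain ⟨χ, hχ⟩ := ContinuousMap.exists_extension' (isClosedEmbedding_val_pullback_fold hf)
    ⟨W.indicator (1 : f.Pullback fold → ℝ), hW.continuous_indicator continuous_one⟩
  have hχW (p : f.Pullback fold) : χ p.1 = W.indicator 1 p := congrFun hχ p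
  let degree (x : C) : ℝ := signedFibreSum (fun t => χ (x, t)) (f x)
  have hdegree : Continuous degree := by
    unfold degree signedFibreSum
    fun_prop
  have hint (x : C) : degree x ∈ AddSubgroup.zmultiples (1 : ℝ) := by
    refine signedFibreSum_mem fun t ht => ?_
    rw [hχW ⟨(x, t), ht.symm⟩]
    rcases indicator_eq_zero_or_self W (1 : f.Pullback fold → ℝ) ⟨(x, t), ht.symm⟩ with h | h
    · rw [h]
      exact zero_mem _
    · rw [h]
      exact AddSubgroup.mem_zmultiples 1
  have hdegree_y : degree y.fst = 1 := by
    have hfold : f y.fst = fold y.snd := y.2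
    unfold degree
    rw [hfold, signedFibreSum_eq_of_one_lt_abs (hfold ▸ hfy)]
    exact (hχW y).trans (indicator_of_mem hy 1)
  have hdegree_z : degree z = 0 := by
    refine AddSubgroup.mem_bot.1 (signedFibreSum_mem fun t ht => AddSubgroup.mem_bot.2 ?_)
    rw [hχW ⟨(z, t), ht.symm⟩, indicator_of_notMem fun h => hz ⟨_, h, rfl⟩]
  have hdegree_eq : degree y.fst = degree z :=
    isPreconnected_univ.constant_of_mapsTo (T := AddSubgroup.zmultiples (1 : ℝ))
      (SetLike.isDiscrete_iff_discreteTopology.2 inferInstance)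
      hdegree.continuousOn (fun x _ => hint x) (mem_univ _) (mem_univ _)
  exact one_ne_zero (hdegree_y.symm.trans (hdegree_eq.trans hdegree_z))

theorem surjOn_pullback_fst_connectedComponent [CompactSpace C] [T2Space C] [PreconnectedSpace C]
    (hf : Continuous f) {y : f.Pullback fold} (hy : ∀ z, |f z| ≤ |f y.fst|) :
    SurjOn Pullback.fst (connectedComponent y) univ := by
  rcases lt_or_ge 1 |f y.fst| with hfy | hfy
  · have := compactSpace_pullback_fold hf
    exact surjOn_connectedComponent_of_isClopen continuous_pullback_fst
      fun W hW hyW => surjOn_pullback_fst_of_isClopen hf hW hyW hfy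
  · obtain ⟨σ, hσ, hσy, hfold⟩ := exists_continuous_section_fold y.snd
    let lift (z : C) : f.Pullback fold := ⟨(z, σ (f z)), (hfold _ ((hy z).trans hfy)).symm⟩
    have hlift : Continuous lift := by fun_prop
    have hlift_y : lift y.fst = y :=
      Subtype.ext (Prod.ext rfl ((congrArg σ y.2).trans hσy))
    intro z _
    exact ⟨lift z, (isPreconnected_range hlift).subset_connectedComponent ⟨y.fst, hlift_y⟩
      (mem_range_self z), rfl⟩

theorem exists_isConnected_image_pullback_fst_eq [T2Space C] (hf : Continuous f)
    {K : Set C} (hK : IsCompact K) (hKc : IsConnected K) {y : f.Pullback fold} (hyK : y.fst ∈ K)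
    (hy : ∀ z ∈ K, |f z| ≤ |f y.fst|) :
    ∃ L : Set (f.Pullback fold), IsClosed L ∧ IsConnected L ∧ y ∈ L ∧ Pullback.fst '' L = K := by
  have : CompactSpace K := isCompact_iff_compactSpace.1 hK
  have : ConnectedSpace K := isConnected_iff_connectedSpace.1 hKc
  let fK : K → ℝ := K.domRestrict f
  have hfK : Continuous fK := hf.comp continuous_subtype_val
  have := compactSpace_pullback_fold hfK
  let incl (p : fK.Pullback fold) : f.Pullback fold := ⟨(p.fst, p.snd), p.2⟩
  have hincl : Continuous incl := by
    unfold incl Pullback.fst Pullback.snd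
    fun_prop
  let yK : fK.Pullback fold := ⟨(⟨y.fst, hyK⟩, y.snd), y.2⟩
  refine ⟨incl '' connectedComponent yK, hincl.isClosedMap _ isClosed_connectedComponent,
    isConnected_connectedComponent.image incl hincl.continuousOn,
    ⟨yK, mem_connectedComponent, rfl⟩, ?_⟩
  rw [← image_comp]
  refine Subset.antisymm (image_subset_iff.2 fun q _ => q.fst.2) fun z hz => ?_
  obtain ⟨q, hq, hqz⟩ :=
    surjOn_pullback_fst_connectedComponent hfK (y := yK) (fun w => hy w w.2) (mem_univ ⟨z, hz⟩)
  exact ⟨q, hq, congrArg Subtype.val hqz⟩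

theorem exists_weaklyConfluent_connectedComponent_pullback [CompactSpace C] [T2Space C]
    [ConnectedSpace C] (hf : Continuous f) :
    ∃ y : f.Pullback fold, WeaklyConfluent ((connectedComponent y).domRestrict Pullback.fst) := by
  obtain ⟨z₀, -, hz₀⟩ := isCompact_univ.exists_isMaxOn univ_nonempty hf.abs.continuousOn
  obtain ⟨t₀, ht₀⟩ := surjective_fold (f z₀)
  let y₀ : f.Pullback fold := ⟨(z₀, t₀), ht₀.symm⟩
  have hy₀ : SurjOn Pullback.fst (connectedComponent y₀) univ :=
    surjOn_pullback_fst_connectedComponent hf fun z => hz₀ (mem_univ z)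
  refine ⟨y₀, WeaklyConfluentOn.domRestrict fun K hK hKc => ?_⟩
  obtain ⟨z₁, hz₁K, hz₁⟩ := hK.isCompact.exists_isMaxOn hKc.nonempty hf.abs.continuousOn
  obtain ⟨y₁, hy₁, rfl⟩ := hy₀ (mem_univ z₁)
  obtain ⟨L, hL, hLc, hyL, hLK⟩ :=
    exists_isConnected_image_pullback_fst_eq hf hK.isCompact hKc hz₁K fun z hz => hz₁ hz
  exact ⟨L, connectedComponent_eq hy₁ ▸ hLc.isPreconnected.subset_connectedComponent hyL, hL, hLc,
    hLK⟩

end FoldPullback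

section FoldTower

/-- The ambient space of the construction: `X` with one bounded real coordinate for each index. -/
abbrev TowerSpace (X S : Type*) : Type _ := X × (S → Icc (-4 : ℝ) 4)

variable {X S : Type*} [TopologicalSpace X]

/-- The points of the tower space at which, for every `s ∈ T`, the coordinate `s` is a lift of the
value of `F s` along `fold`. -/
def foldTower (F : S → C(TowerSpace X S, ℝ)) (T : Set S) : Set (TowerSpace X S) :=
  {p | ∀ s ∈ T, fold (p.2 s) = F s p}

theorem foldTower_anti (F : S → C(TowerSpace X S, ℝ)) {T T' : Set S} (h : T ⊆ T') :
    foldTower F T' ⊆ foldTower F T :=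
  fun _ hp s hs => hp s (h hs)

theorem isClosed_foldTower (F : S → C(TowerSpace X S, ℝ)) (T : Set S) :
    IsClosed (foldTower F T) := by
  simp only [foldTower, ofPred_forall]
  exact isClosed_iInter fun s => isClosed_iInter fun _ => isClosed_eq (by fun_prop) (by fun_prop)

/-- The continua inside `foldTower F T` on which the projection to `X` is weakly confluent: the
stages of the inverse system, realised in one hyperspace. -/
def IsFoldContinuum (F : S → C(TowerSpace X S, ℝ)) (T : Set S)
    (C : NonemptyCompacts (TowerSpace X S)) : Prop :=
  IsConnected (C : Set (TowerSpace X S)) ∧ (C : Set (TowerSpace X S)) ⊆ foldTower F T ∧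
    WeaklyConfluentOn Prod.fst (C : Set (TowerSpace X S))

variable {F : S → C(TowerSpace X S, ℝ)} [T2Space X]

theorem exists_isFoldContinuum_of_mapsTo {Y : Type*} [TopologicalSpace Y]
    [CompactSpace Y] [ConnectedSpace Y] {g : Y → TowerSpace X S} (hg : Continuous g)
    (hwc : WeaklyConfluent (Prod.fst ∘ g)) {T : Set S} (hT : ∀ y, g y ∈ foldTower F T) :
    ∃ C, IsFoldContinuum F T C :=
  ⟨⟨⟨range g, isCompact_range hg⟩, range_nonempty g⟩, isConnected_range hg, range_subset_iff.2 hT,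
    hwc.weaklyConfluentOn_range hg⟩

theorem exists_isFoldContinuum_insert [DecidableEq S] {T : Set S} {a : S} (ha : a ∉ T)
    (hF : ∀ p, |F a p| ≤ 2)
    (hupdate : ∀ s ∈ insert a T, ∀ x y r, F s (x, update y a r) = F s (x, y))
    {C : NonemptyCompacts (TowerSpace X S)} (hC : IsFoldContinuum F T C) :
    ∃ D, IsFoldContinuum F (insert a T) D := by
  obtain ⟨hCc, hCT, hCwc⟩ := hC
  have : CompactSpace C := isCompact_iff_compactSpace.1 C.isCompact
  have : ConnectedSpace C := isConnected_iff_connectedSpace.1 hCc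
  let f : C → ℝ := fun c => F a c
  have hf : Continuous f := by fun_prop
  have := compactSpace_pullback_fold hf
  obtain ⟨y, hy⟩ := exists_weaklyConfluent_connectedComponent_pullback hf
  have hbound (q : f.Pullback fold) : q.snd ∈ Icc (-4 : ℝ) 4 := by
    have hq : |fold q.snd| ≤ 2 := q.2 ▸ hF q.fst
    exact abs_le.1 (by linarith [abs_le_abs_fold_add_two q.snd])
  have : ConnectedSpace (connectedComponent y) :=
    isConnected_iff_connectedSpace.1 isConnected_connectedComponent
  have : CompactSpace (connectedComponent y) :=
    isCompact_iff_compactSpace.1 isClosed_connectedComponent.isCompact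
  refine exists_isFoldContinuum_of_mapsTo (Y := connectedComponent y)
    (g := fun q => (q.1.fst.1.1, update q.1.fst.1.2 a ⟨q.1.snd, hbound q.1⟩)) ?_
    (hCwc.domRestrict.comp hy) ?_
  · unfold Pullback.fst Pullback.snd
    fun_prop
  · intro q s hs
    rw [hupdate s hs]
    dsimp only
    rcases eq_or_ne s a with rfl | hsa
    · rw [update_self]
      exact q.1.2.symm
    · rw [update_of_ne hsa]
      exact hCT q.1.fst.2 s (hs.resolve_left hsa)

variable [CompactSpace X]

theorem exists_isFoldContinuum_finset [ConnectedSpace X] {ι : Type*} [LinearOrder ι] (rank : S → ι)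
    (hF : ∀ s p, |F s p| ≤ 2)
    (hrank : ∀ s x y y', EqOn y y' {r | rank r < rank s} → F s (x, y) = F s (x, y'))
    (T : Finset S) : ∃ C, IsFoldContinuum F T C := by
  classical
  induction T using Finset.induction_on_max_value rank with
  | empty =>
    exact exists_isFoldContinuum_of_mapsTo (g := fun x => (x, fun _ => ⟨0, by norm_num⟩))
      (by fun_prop) (fun K hK hKc => ⟨K, hK, hKc, image_id K⟩) (by simp [foldTower])
  | insert a T ha hmax ih =>
    obtain ⟨C, hC⟩ := ih
    rw [Finset.coe_insert]
    refine exists_isFoldContinuum_insert (Finset.mem_coe.not.2 ha) (hF a) ?_ hC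
    intro s hs x y r
    refine hrank s x _ _ fun b hb => update_of_ne ?_ _ _
    rintro rfl
    exact hb.not_ge (hs.elim (fun h => h ▸ le_rfl) (hmax s))

theorem isClosed_setOf_isFoldContinuum (F : S → C(TowerSpace X S, ℝ)) (T : Set S) :
    IsClosed {C | IsFoldContinuum F T C} :=
  isClosed_setOf_isConnected_nonemptyCompacts.inter <|
    (NonemptyCompacts.isClosed_subsets_of_isClosed (isClosed_foldTower F T)).inter <|
      isClosed_setOf_weaklyConfluentOn continuous_fst

theorem exists_isFoldContinuum_univ (h : ∀ T : Finset S, ∃ C, IsFoldContinuum F T C) :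
    ∃ C, IsFoldContinuum F univ C := by
  classical
  have hclosed (T : Finset S) := isClosed_setOf_isFoldContinuum F T
  obtain ⟨C, hC⟩ : (⋂ T : Finset S, {C | IsFoldContinuum F T C}).Nonempty := by
    refine IsCompact.nonempty_iInter_of_directed_nonempty_isCompact_isClosed _
      (directed_of_isDirected_le fun T T' hTT' C hC => ?_) h (fun T => (hclosed T).isCompact)
      hclosed
    exact ⟨hC.1, hC.2.1.trans (foldTower_anti F (Finset.coe_subset.2 hTT')), hC.2.2⟩
  rw [mem_iInter] at hC
  refine ⟨C, (hC ∅).1, fun p hp s _ => ?_, (hC ∅).2.2⟩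
  exact (hC {s}).2.1 hp s (Finset.mem_coe.2 (Finset.mem_singleton_self s))

end FoldTower

section Separation

variable {Y : Type*} [TopologicalSpace Y] {𝓕 : Submodule ℚ C(Y, ℝ)}

theorem exists_mem_lt_neg_one_of_ne (h1 : 1 ∈ 𝓕) {f : C(Y, ℝ)} (hf : f ∈ 𝓕) {y z : Y}
    (hyz : f y ≠ f z) : ∃ g ∈ 𝓕, g y < -1 ∧ 1 < g z := by
  wlog hlt : f y < f z generalizing f
  · exact this (neg_mem hf) (neg_injective.ne hyz)
      (neg_lt_neg (lt_of_le_of_ne (not_lt.1 hlt) hyz.symm))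
  obtain ⟨p, hyp, hpz⟩ := exists_rat_btwn hlt
  obtain ⟨q, hq⟩ := exists_rat_gt (max (1 / (p - f y)) (1 / (f z - p)))
  obtain ⟨hqy, hqz⟩ := max_lt_iff.1 hq
  rw [div_lt_iff₀ (by linarith)] at hqy hqz
  refine ⟨q • (f - p • 1), 𝓕.smul_mem q (sub_mem hf (𝓕.smul_mem p h1)), ?_, ?_⟩ <;>
    simp only [ContinuousMap.smul_apply, ContinuousMap.sub_apply, ContinuousMap.one_apply,
      Rat.smul_def, mul_one] <;>
    linarith

theorem inf_mem_of_supClosed (hsup : SupClosed (𝓕 : Set C(Y, ℝ))) {f g : C(Y, ℝ)} (hf : f ∈ 𝓕)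
    (hg : g ∈ 𝓕) : f ⊓ g ∈ 𝓕 := by
  rw [eq_sub_of_add_eq (inf_add_sup f g)]
  exact sub_mem (add_mem hf hg) (hsup hf hg)

theorem exists_mem_lt_neg_one_and_one_lt_on (h1 : 1 ∈ 𝓕) (hsup : SupClosed (𝓕 : Set C(Y, ℝ)))
    (hsep : ∀ y z, y ≠ z → ∃ f ∈ 𝓕, f y ≠ f z) {L : Set Y} (hL : IsCompact L) {y : Y}
    (hy : y ∉ L) : ∃ g ∈ 𝓕, g y < -1 ∧ ∀ z ∈ L, 1 < g z := by
  refine IsCompact.induction_on (p := fun L => ∃ g ∈ 𝓕, g y < -1 ∧ ∀ z ∈ L, 1 < g z) hL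
    ⟨(-2 : ℚ) • 1, 𝓕.smul_mem _ h1, by norm_num [Rat.smul_def], by simp⟩ ?_ ?_ ?_
  · rintro L L' hLL' ⟨g, hg, hgy, hgL'⟩
    exact ⟨g, hg, hgy, fun z hz => hgL' z (hLL' hz)⟩
  · rintro L L' ⟨g, hg, hgy, hgL⟩ ⟨g', hg', hgy', hgL'⟩
    exact ⟨g ⊔ g', hsup hg hg', max_lt hgy hgy', fun z hz =>
      lt_max_iff.2 (hz.imp (hgL z) (hgL' z))⟩
  · intro z hz
    obtain ⟨f, hf, hfyz⟩ := hsep y z (ne_of_mem_of_not_mem hz hy).symm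
    obtain ⟨g, hg, hgy, hgz⟩ := exists_mem_lt_neg_one_of_ne h1 hf hfyz
    exact ⟨{w | 1 < g w}, mem_nhdsWithin_of_mem_nhds
      ((isOpen_lt continuous_const g.continuous).mem_nhds hgz), g, hg, hgy, fun w hw => hw⟩

variable [CompactSpace Y]

theorem isTopologicalBasis_image_setOf_neg (h1 : 1 ∈ 𝓕) (hsup : SupClosed (𝓕 : Set C(Y, ℝ)))
    (hsep : ∀ y z, y ≠ z → ∃ f ∈ 𝓕, f y ≠ f z) :
    IsTopologicalBasis ((fun f : C(Y, ℝ) => {y | f y < 0}) '' 𝓕) := by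
  refine isTopologicalBasis_of_isOpen_of_nhds ?_ fun y U hy hU => ?_
  · rintro _ ⟨f, -, rfl⟩
    exact isOpen_lt f.continuous continuous_const
  · obtain ⟨g, hg, hgy, hgU⟩ := exists_mem_lt_neg_one_and_one_lt_on h1 hsup hsep
      hU.isClosed_compl.isCompact (notMem_compl_iff.2 hy)
    refine ⟨_, ⟨g, hg, rfl⟩, show g y < 0 by linarith, fun z (hz : g z < 0) => ?_⟩
    by_contra hzU
    linarith [hgU z hzU]

theorem exists_mem_bounded_nonpos_on_nonneg_on (h1 : 1 ∈ 𝓕) (hsup : SupClosed (𝓕 : Set C(Y, ℝ)))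
    (hsep : ∀ y z, y ≠ z → ∃ f ∈ 𝓕, f y ≠ f z) {A B : Set Y} (hA : IsClosed A) (hB : IsClosed B)
    {a b : Y} (haA : a ∈ A) (haB : a ∉ B)
    (hbB : b ∈ B) (hbA : b ∉ A) :
    ∃ f ∈ 𝓕, (∀ y, |f y| ≤ 2) ∧ (∀ y ∈ A, f y ≤ 0) ∧ (∀ y ∈ B, 0 ≤ f y) ∧
      f a < -1 ∧ 1 < f b := by
  obtain ⟨u, hu, hua, huB⟩ := exists_mem_lt_neg_one_and_one_lt_on h1 hsup hsep hB.isCompact haB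
  obtain ⟨v, hv, hvb, hvA⟩ := exists_mem_lt_neg_one_and_one_lt_on h1 hsup hsep hA.isCompact hbA
  have trunc_mem {w : C(Y, ℝ)} (hw : w ∈ 𝓕) : (-w ⊔ 0) ⊓ (1 + 1) ∈ 𝓕 :=
    inf_mem_of_supClosed hsup (hsup (neg_mem hw) 𝓕.zero_mem) (add_mem h1 h1)
  refine ⟨(-v ⊔ 0) ⊓ (1 + 1) - (-u ⊔ 0) ⊓ (1 + 1), sub_mem (trunc_mem hv) (trunc_mem hu), ?_⟩
  simp only [ContinuousMap.sub_apply, ContinuousMap.inf_apply, ContinuousMap.sup_apply,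
    ContinuousMap.neg_apply, ContinuousMap.add_apply, ContinuousMap.one_apply,
    ContinuousMap.zero_apply]
  refine ⟨fun y => ?_, fun y hy => ?_, fun y hy => ?_, ?_, ?_⟩
  · grind
  · have := hvA y hy
    grind
  · have := huB y hy
    grind
  · have := hvA a haA
    grind
  · have := huB b hbB
    grind

theorem hereditarilyIndecomposable_of_forall_exists_fold (h1 : 1 ∈ 𝓕)
    (hsup : SupClosed (𝓕 : Set C(Y, ℝ))) (hsep : ∀ y z, y ≠ z → ∃ f ∈ 𝓕, f y ≠ f z)
    (hfold : ∀ f ∈ 𝓕, (∀ y, |f y| ≤ 2) → ∃ t : C(Y, ℝ), ∀ y, fold (t y) = f y) :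
    HereditarilyIndecomposable Y := by
  rintro A B hA hAc hB hBc ⟨c, hcA, hcB⟩
  by_contra! h
  obtain ⟨a, haA, haB⟩ := not_subset.1 h.1
  obtain ⟨b, hbB, hbA⟩ := not_subset.1 h.2
  obtain ⟨f, hf, hf2, hfA, hfB, hfa, hfb⟩ :=
    exists_mem_bounded_nonpos_on_nonneg_on h1 hsup hsep hA hB haA haB hbB hbA
  obtain ⟨t, ht⟩ := hfold f hf hf2
  simp only [← ht] at hfA hfB hfa hfb
  have hneg : t c < 0 := neg_of_fold_nonpos_of_isPreconnected hAc.isPreconnected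
    t.continuous.continuousOn hfA haA hfa hcA
  have hpos : 0 < t c := pos_of_fold_nonneg_of_isPreconnected hBc.isPreconnected
    t.continuous.continuousOn hfB hbB hfb hcB
  exact hneg.not_gt hpos

end Separation

/-- The operations that build the functions on the tower space from functions on `X`. -/
inductive FoldTermOp : Type
  | one
  | coord
  | smul (q : ℚ)
  | add
  | sup
  deriving Countable

/-- The arguments of a function symbol: the symbols `Sum.inl a` stand for functions on `X`. -/
def FoldTermArity {A : Type u} : A ⊕ FoldTermOp → Type
  | .inl _ | .inr .one => Empty
  | .inr .coord | .inr (.smul _) => Unit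
  | .inr .add | .inr .sup => Bool

instance {A : Type u} : ∀ o : A ⊕ FoldTermOp, Fintype (FoldTermArity o)
  | .inl _ | .inr .one => inferInstanceAs (Fintype Empty)
  | .inr .coord | .inr (.smul _) => inferInstanceAs (Fintype Unit)
  | .inr .add | .inr .sup => inferInstanceAs (Fintype Bool)

/-- The index set of the tower: formal rational lattice expressions in given functions on `X` and in
the coordinates of the tower, where `coord s` names the coordinate indexed by the term `s`. -/
abbrev FoldTerm (A : Type u) : Type u := WType (FoldTermArity (A := A))

namespace FoldTerm

theorem cardinalMk_le {A : Type u} {κ : Cardinal.{u}} (hκ : Cardinal.aleph0 ≤ κ)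
    (hA : Cardinal.mk A ≤ κ) : Cardinal.mk (FoldTerm A) ≤ κ := by
  have hop : Cardinal.mk (A ⊕ FoldTermOp) ≤ κ := by
    rw [Cardinal.mk_sum, Cardinal.lift_uzero]
    exact Cardinal.add_le_of_le hκ hA
      ((Cardinal.lift_le_aleph0.2 Cardinal.mk_le_aleph0).trans hκ)
  refine WType.cardinalMk_le_max_aleph0_of_finite'.trans ?_
  rw [Cardinal.lift_uzero]
  exact max_le hop hκ

variable {A X : Type u} [TopologicalSpace X]

/-- The function on the tower space that a term denotes when its base symbols are read as `h`. -/
noncomputable def eval (h : A → C(X, ℝ)) :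
    FoldTerm A → C(TowerSpace X (FoldTerm A), ℝ)
  | .mk (.inl a) _ => (h a).comp .fst
  | .mk (.inr .one) _ => 1
  | .mk (.inr .coord) s => ⟨fun p => p.2 (s ()), by fun_prop⟩
  | .mk (.inr (.smul q)) s => q • eval h (s ())
  | .mk (.inr .add) s => eval h (s false) + eval h (s true)
  | .mk (.inr .sup) s => eval h (s false) ⊔ eval h (s true)

theorem eval_congr (h : A → C(X, ℝ)) (x : X) {y y' : FoldTerm A → Icc (-4 : ℝ) 4}
    (s : FoldTerm A) (hy : EqOn y y' {r | r.depth < s.depth}) :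
    eval h s (x, y) = eval h s (x, y') := by
  induction s with
  | mk o s ih =>
    have hsub (i : FoldTermArity o) : eval h (s i) (x, y) = eval h (s i) (x, y') :=
      ih i (hy.mono fun r hr => lt_trans hr (WType.depth_lt_depth_mk o s i))
    match o with
    | .inl a => rfl
    | .inr .one => rfl
    | .inr .coord => exact congrArg Subtype.val (hy (WType.depth_lt_depth_mk _ s ()))
    | .inr (.smul q) => exact congrArg (q • ·) (hsub ())
    | .inr .add => exact congrArg₂ (· + ·) (hsub false) (hsub true)
    | .inr .sup => exact congrArg₂ (· ⊔ ·) (hsub false) (hsub true)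

/-- The function denoted by a term, truncated to take values in `[-2, 2]`, so that its lifts along
`fold` lie in `[-4, 4]`. -/
noncomputable def truncEval (h : A → C(X, ℝ)) (s : FoldTerm A) :
    C(TowerSpace X (FoldTerm A), ℝ) :=
  ⟨fun p => max (-2) (min (eval h s p) 2), by fun_prop⟩

/-- The restrictions to `C` of the functions denoted by terms. -/
noncomputable def functionsOn (h : A → C(X, ℝ)) (C : Set (TowerSpace X (FoldTerm A))) :
    Submodule ℚ C(C, ℝ) where
  carrier := range fun s => (eval h s).restrict C
  zero_mem' := ⟨.mk (.inr (.smul 0)) fun _ => .mk (.inr .one) Empty.elim,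
    zero_smul ℚ (1 : C(C, ℝ))⟩
  add_mem' := by
    rintro _ _ ⟨s, rfl⟩ ⟨t, rfl⟩
    exact ⟨.mk (.inr .add) fun b => cond b t s, rfl⟩
  smul_mem' := by
    rintro q _ ⟨s, rfl⟩
    exact ⟨.mk (.inr (.smul q)) fun _ => s, rfl⟩

variable {h : A → C(X, ℝ)} {C : Set (TowerSpace X (FoldTerm A))}

theorem mem_functionsOn {f : C(C, ℝ)} :
    f ∈ functionsOn h C ↔ ∃ s, (eval h s).restrict C = f :=
  Iff.rfl

theorem one_mem_functionsOn : 1 ∈ functionsOn h C :=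
  mem_functionsOn.2 ⟨.mk (.inr .one) Empty.elim, rfl⟩

theorem supClosed_functionsOn : SupClosed (functionsOn h C : Set C(C, ℝ)) := by
  intro f hf g hg
  obtain ⟨s, rfl⟩ := mem_functionsOn.1 hf
  obtain ⟨t, rfl⟩ := mem_functionsOn.1 hg
  exact mem_functionsOn.2 ⟨.mk (.inr .sup) fun b => cond b t s, rfl⟩

theorem exists_mem_functionsOn_ne (hsep : ∀ x y, x ≠ y → ∃ a, h a x ≠ h a y) (p q : C)
    (hpq : p ≠ q) : ∃ f ∈ functionsOn h C, f p ≠ f q := by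
  by_cases hfst : p.1.1 = q.1.1
  · obtain ⟨s, hs⟩ := ne_iff.1 fun hsnd => hpq (Subtype.ext (Prod.ext hfst hsnd))
    exact ⟨_, mem_functionsOn.2 ⟨.mk (.inr .coord) fun _ => s, rfl⟩, Subtype.val_injective.ne hs⟩
  · obtain ⟨a, ha⟩ := hsep _ _ hfst
    exact ⟨_, mem_functionsOn.2 ⟨.mk (.inl a) Empty.elim, rfl⟩, ha⟩

theorem hereditarilyIndecomposable_of_subset_foldTower [CompactSpace C]
    (hsep : ∀ x y, x ≠ y → ∃ a, h a x ≠ h a y) (hC : C ⊆ foldTower (truncEval h) univ) :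
    HereditarilyIndecomposable C := by
  refine hereditarilyIndecomposable_of_forall_exists_fold one_mem_functionsOn
    supClosed_functionsOn (exists_mem_functionsOn_ne hsep) fun f hf hf2 => ?_
  obtain ⟨s, rfl⟩ := mem_functionsOn.1 hf
  refine ⟨⟨fun c => c.1.2 s, by fun_prop⟩, fun c => (hC c.2 s (mem_univ s)).trans ?_⟩
  obtain ⟨hlower, hupper⟩ := abs_le.1 (hf2 c)
  exact (congrArg (max (-2)) (min_eq_left hupper)).trans (max_eq_right hlower)

theorem exists_isTopologicalBasis_cardinalMk_le [CompactSpace C]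
    (hsep : ∀ x y, x ≠ y → ∃ a, h a x ≠ h a y) {κ : Cardinal.{u}} (hκ : Cardinal.aleph0 ≤ κ)
    (hA : Cardinal.mk A ≤ κ) : ∃ B : Set (Set C), IsTopologicalBasis B ∧ Cardinal.mk B ≤ κ :=
  ⟨_, isTopologicalBasis_image_setOf_neg one_mem_functionsOn supClosed_functionsOn
      (exists_mem_functionsOn_ne hsep),
    Cardinal.mk_image_le.trans (Cardinal.mk_range_le.trans (cardinalMk_le hκ hA))⟩

theorem exists_isFoldContinuum_truncEval [CompactSpace X] [T2Space X] [ConnectedSpace X]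
    (h : A → C(X, ℝ)) : ∃ C, IsFoldContinuum (truncEval h) univ C := by
  refine exists_isFoldContinuum_univ (exists_isFoldContinuum_finset WType.depth ?_ ?_)
  · exact fun s p => abs_le.2 ⟨le_max_left _ _, max_le (by norm_num) (min_le_right _ _)⟩
  · exact fun s x y y' hy =>
      congrArg (fun v : ℝ => max (-2) (min v 2)) (eval_congr h x s hy)

end FoldTerm

section SeparatingFamily

theorem exists_separatingFamily_of_isTopologicalBasis {X : Type u} [TopologicalSpace X] [T4Space X]
    {B : Set (Set X)} (hB : IsTopologicalBasis B) {κ : Cardinal.{u}} (hκ : Cardinal.aleph0 ≤ κ)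
    (hBκ : Cardinal.mk B ≤ κ) :
    ∃ (A : Type u) (h : A → C(X, ℝ)), Cardinal.mk A ≤ κ ∧
      ∀ x y, x ≠ y → ∃ a, h a x ≠ h a y := by
  let A := {p : B × B // closure p.1.1 ⊆ p.2.1}
  have urysohn (p : A) : ∃ f : C(X, ℝ), EqOn f 0 (closure p.1.1) ∧ EqOn f 1 p.1.2.1ᶜ := by
    obtain ⟨f, hf0, hf1, -⟩ := exists_continuous_zero_one_of_isClosed isClosed_closure
      (hB.isOpen p.1.2.2).isClosed_compl (disjoint_compl_right_iff_subset.2 p.2)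
    exact ⟨f, hf0, hf1⟩
  choose h h0 h1 using urysohn
  refine ⟨A, h, ?_, fun x y hxy => ?_⟩
  · calc
      Cardinal.mk A ≤ Cardinal.mk (B × B) := Cardinal.mk_subtype_le _
      _ = Cardinal.mk B * Cardinal.mk B := (Cardinal.mul_def B B).symm
      _ ≤ κ * κ := mul_le_mul' hBκ hBκ
      _ = κ := Cardinal.mul_eq_self hκ
  · obtain ⟨V, hV, hxV, hVy⟩ := hB.exists_subset_of_mem_open (show x ∈ {y}ᶜ from hxy)
      isOpen_compl_singleton
    obtain ⟨U, hU, hxU, hUV⟩ := hB.exists_closure_subset (hB.mem_nhds hV hxV)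
    refine ⟨⟨(⟨U, hU⟩, ⟨V, hV⟩), hUV⟩, ?_⟩
    rw [h0 _ (subset_closure hxU), h1 _ fun hyV => hVy hyV rfl]
    exact zero_ne_one

end SeparatingFamily

/-- Every continuum of weight at most `κ` is the weakly confluent image of a
hereditarily indecomposable continuum of weight at most `κ`. -/
theorem continuum_weakly_confluent_image_of_HI_same_weight
    (κ : Cardinal.{u}) (hκ : Cardinal.aleph0 ≤ κ)
    (X : Type u) [TopologicalSpace X] [CompactSpace X] [T2Space X]
    [ConnectedSpace X] [Nonempty X]
    (hw : ∃ B : Set (Set X), TopologicalSpace.IsTopologicalBasis B ∧ Cardinal.mk B ≤ κ) :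
    ∃ (Y : Type u) (tY : TopologicalSpace Y),
      @CompactSpace Y tY ∧ @T2Space Y tY ∧ @ConnectedSpace Y tY ∧ Nonempty Y ∧
      @HereditarilyIndecomposable Y tY ∧
      (∃ B : Set (Set Y), @TopologicalSpace.IsTopologicalBasis Y tY B ∧
        Cardinal.mk B ≤ κ) ∧
      ∃ f : Y → X, @Continuous Y X tY _ f ∧ Surjective f ∧
        @WeaklyConfluent Y X tY _ f := by
  obtain ⟨B, hB, hBκ⟩ := hw
  obtain ⟨A, h, hA, hsep⟩ := exists_separatingFamily_of_isTopologicalBasis hB hκ hBκ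
  obtain ⟨C, hC, hCT, hwc⟩ := FoldTerm.exists_isFoldContinuum_truncEval h
  have : CompactSpace C := isCompact_iff_compactSpace.1 C.isCompact
  have : ConnectedSpace C := isConnected_iff_connectedSpace.1 hC
  exact ⟨C, inferInstance, inferInstance, inferInstance, inferInstance, inferInstance,
    FoldTerm.hereditarilyIndecomposable_of_subset_foldTower hsep hCT,
    FoldTerm.exists_isTopologicalBasis_cardinalMk_le hsep hκ hA,
    (C : Set (TowerSpace X (FoldTerm A))).domRestrict Prod.fst,
    continuous_fst.comp continuous_subtype_val,
    hwc.domRestrict.surjective, hwc.domRestrict⟩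
end
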